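/- arXiv:0803.0917 — 2 statements merged into one kernel-verified Lean document; each statement's English description precedes it below -/
import Mathlib

section
/- Every nonzero vector of U lies in exactly two pentads; consequently the map sending an unordered pair {S, S'} of distinct pentads to the unique element of S ∩ S' is a bijection from the set of 2-element subsets of the set of pentads onto U ∖ {0} (which has 15 elements). -/
/-!
The group `Sp₄(2)` is isomorphic to `S₆`: the space `U` can be described as the even subsets of
`Fin 6` modulo complementation, so that the 15 nonzero vectors are the 15 edges of `K₆`, with two
distinct edges pairing to `1` exactly when they share a vertex. Concretely, six vectors
`pentadVertex i` with sum zero are chosen so that the edge `{i, j}` is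
`pentadVertex i + pentadVertex j`. Under this dictionary a pentad is a set of five pairwise
intersecting edges, hence the star `pentadStar i` of a vertex `i` (`IsPentad.exists_eq_star`):
three pairwise intersecting edges form a triangle `u, v, u + v` or lie in a star, and a triangle
cannot occur since every further element `x` satisfies `⟨x, u + v⟩ = 1 + 1 = 0`.

Thus pentads correspond to the six vertices, each edge lies in the stars of its two endpoints, and
two distinct stars share exactly one edge. The map on pairs is then injective because a pair with
image `u` must be the set of both pentads through `u`, and surjective because that set is a pair
whose unique common vector is `u`.
-/

/-- The symplectic vector space `U = 𝔽₂⁴`. -/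
abbrev Uspace : Type := Fin 4 → ZMod 2

/-- The symplectic form on `U` with `⟨eᵢ,eⱼ⟩ = ⟨fᵢ,fⱼ⟩ = 0` and `⟨eᵢ,fⱼ⟩ = δᵢⱼ`,
where `e₁,e₂,f₁,f₂` are the standard basis vectors (coordinates `0,1,2,3`). -/
def symForm (x y : Uspace) : ZMod 2 :=
  x 0 * y 2 + x 1 * y 3 + x 2 * y 0 + x 3 * y 1

/-- A pentad is a set of 5 nonzero vectors of `U` pairing to `1` under the
symplectic form. -/
def IsPentad (S : Finset Uspace) : Prop :=
  (0 : Uspace) ∉ S ∧ S.card = 5 ∧ ∀ u ∈ S, ∀ v ∈ S, u ≠ v → symForm u v = 1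

/-- Six vectors of `U` labelling the vertices of `K₆`: a pentad with sum zero, followed by `0`. -/
def pentadVertex : Fin 6 → Uspace :=
  ![![1, 0, 0, 0], ![0, 0, 1, 0], ![1, 1, 1, 0], ![1, 0, 1, 1], ![1, 1, 1, 1], 0]

/-- The star of the vertex `i`: the five vectors representing the edges `{i, j}` of `K₆`. -/
def pentadStar (i : Fin 6) : Finset Uspace :=
  (Finset.univ.erase i).image fun j => pentadVertex i + pentadVertex j

lemma zero_notMem_star : ∀ i, (0 : Uspace) ∉ pentadStar i := by decide

lemma card_star : ∀ i, (pentadStar i).card = 5 := by decide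

set_option maxRecDepth 10000 in
lemma isPentad_star (i : Fin 6) : IsPentad (pentadStar i) := by
  refine ⟨zero_notMem_star i, card_star i, ?_⟩
  revert i
  unfold symForm
  decide

lemma card_filter_mem_star :
    ∀ u : Uspace, u ≠ 0 → (Finset.univ.filter fun i => u ∈ pentadStar i).card = 2 := by
  decide

set_option maxRecDepth 10000 in
lemma mem_star_and_mem_star_iff : ∀ i j : Fin 6, i ≠ j → ∀ u : Uspace,
    (u ∈ pentadStar i ∧ u ∈ pentadStar j) ↔ u = pentadVertex i + pentadVertex j := by
  decide

lemma pentadStar_injective : Function.Injective pentadStar := by decide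

set_option maxRecDepth 100000 in
set_option maxHeartbeats 4000000 in
set_option synthInstance.maxSize 1000 in
/-- An edge meeting two intersecting edges `u`, `v` either passes through their common vertex or
closes the triangle. -/
lemma exists_star_of_symForm_eq_one : ∀ u v : Uspace, symForm u v = 1 →
    ∃ i, u ∈ pentadStar i ∧ v ∈ pentadStar i ∧
      ∀ w, symForm u w = 1 → symForm v w = 1 → w ∈ pentadStar i ∨ w = u + v := by
  decide

lemma symForm_add_right (x u v : Uspace) : symForm x (u + v) = symForm x u + symForm x v := by
  simp only [symForm, Pi.add_apply]
  ring

lemma IsPentad.exists_eq_star {S : Finset Uspace} (hS : IsPentad S) :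
    ∃ i, pentadStar i = S := by
  obtain ⟨-, hcard, hform⟩ := hS
  obtain ⟨u, hu, v, hv, huv⟩ := Finset.one_lt_card.mp (by omega : 1 < S.card)
  obtain ⟨i, hui, hvi, hi⟩ := exists_star_of_symForm_eq_one u v (hform u hu v hv huv)
  refine ⟨i, (Finset.eq_of_subset_of_card_le (fun w hw => ?_) (by rw [card_star, hcard])).symm⟩
  by_cases hwu : w = u
  · rwa [hwu]
  by_cases hwv : w = v
  · rwa [hwv]
  refine (hi w (hform u hu w hw (Ne.symm hwu)) (hform v hv w hw (Ne.symm hwv))).resolve_right ?_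
  intro hw_sum
  -- The triangle `u, v, w = u + v` is excluded by a fourth element of `S`.
  obtain ⟨x, hx, hx'⟩ := Finset.exists_mem_notMem_of_card_lt_card
    (s := {u, v, w}) (t := S) (lt_of_le_of_lt Finset.card_le_three (by omega))
  simp only [Finset.mem_insert, Finset.mem_singleton, not_or] at hx'
  have h := hform x hx w hw hx'.2.2
  rw [hw_sum, symForm_add_right, hform x hx u hu hx'.1, hform x hx v hv hx'.2.1] at h
  exact absurd h (by decide)

/-- Pentads correspond to the six vertices of `K₆`. -/
noncomputable def pentadEquiv : Fin 6 ≃ {S : Finset Uspace // IsPentad S} :=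
  Equiv.ofBijective (fun i => ⟨pentadStar i, isPentad_star i⟩)
    ⟨fun _ _ h => pentadStar_injective (congrArg Subtype.val h), fun S =>
      let ⟨i, hi⟩ := S.2.exists_eq_star
      ⟨i, Subtype.ext hi⟩⟩

lemma coe_pentadEquiv (i : Fin 6) : (pentadEquiv i : Finset Uspace) = pentadStar i := rfl

lemma existsUnique_mem_of_ne {S T : {S : Finset Uspace // IsPentad S}} (h : S ≠ T) :
    ∃! u : Uspace, u ∈ S.1 ∧ u ∈ T.1 := by
  obtain ⟨i, rfl⟩ := pentadEquiv.surjective S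
  obtain ⟨j, rfl⟩ := pentadEquiv.surjective T
  have hij : i ≠ j := fun e => h (congrArg _ e)
  simp only [coe_pentadEquiv, mem_star_and_mem_star_iff i j hij]
  exact existsUnique_eq

/-- The set of pentads through the vector `u`. -/
noncomputable def pentadsThrough (u : Uspace) : Finset {S : Finset Uspace // IsPentad S} :=
  (Finset.univ.filter fun i => u ∈ pentadStar i).map pentadEquiv.toEmbedding

lemma mem_pentadsThrough {u : Uspace} {S : {S : Finset Uspace // IsPentad S}} :
    S ∈ pentadsThrough u ↔ u ∈ S.1 := by
  obtain ⟨i, rfl⟩ := pentadEquiv.surjective S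
  simp [pentadsThrough, coe_pentadEquiv]

lemma card_pentadsThrough {u : Uspace} (hu : u ≠ 0) : (pentadsThrough u).card = 2 := by
  rw [pentadsThrough, Finset.card_map, card_filter_mem_star u hu]

lemma existsUnique_mem_pair (P : Finset {S : Finset Uspace // IsPentad S}) (hP : P.card = 2) :
    ∃! u : Uspace, ∀ S ∈ P, u ∈ S.1 := by
  classical
  obtain ⟨S, T, hST, rfl⟩ := Finset.card_eq_two.mp hP
  simpa only [Finset.mem_insert, Finset.mem_singleton, forall_eq_or_imp, forall_eq] using
    existsUnique_mem_of_ne hST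

/-- Every nonzero vector of `U` lies in exactly two pentads; consequently the map
sending an unordered pair of distinct pentads to an element lying in both of them
(necessarily the unique element of their intersection) is a bijection from the
2-element subsets of the set of pentads onto the 15-element set `U ∖ {0}`. -/
theorem pentad_pairs_biject_nonzero_vectors :
    (∀ u : Uspace, u ≠ 0 → Nat.card {S : Finset Uspace // IsPentad S ∧ u ∈ S} = 2) ∧
    Nat.card {u : Uspace // u ≠ 0} = 15 ∧
    ∃ φ : {P : Finset {S : Finset Uspace // IsPentad S} // P.card = 2} →
        {u : Uspace // u ≠ 0},
      Function.Bijective φ ∧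
      ∀ P : {P : Finset {S : Finset Uspace // IsPentad S} // P.card = 2},
        ∀ S ∈ P.1, (φ P : Uspace) ∈ (S : {S : Finset Uspace // IsPentad S}).1 := by
  refine ⟨fun u hu => ?_, ?_, ?_⟩
  · rw [← card_pentadsThrough hu, ← Nat.card_eq_finsetCard]
    refine Nat.card_congr ((Equiv.subtypeSubtypeEquivSubtypeInter IsPentad (u ∈ ·)).symm.trans ?_)
    exact Equiv.subtypeEquivRight fun S => mem_pentadsThrough.symm
  · rw [Nat.card_eq_fintype_card]
    decide
  · choose f hf hf_unique using fun P : {P : Finset {S : Finset Uspace // IsPentad S} //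
      P.card = 2} => existsUnique_mem_pair P.1 P.2
    have hf_ne : ∀ P, f P ≠ 0 := fun P h0 => by
      obtain ⟨S, hS⟩ := Finset.card_pos.mp (by rw [P.2]; norm_num : 0 < P.1.card)
      exact S.2.1 (h0 ▸ hf P S hS)
    have hf_through : ∀ P, P.1 = pentadsThrough (f P) := fun P =>
      Finset.eq_of_subset_of_card_le (fun S hS => mem_pentadsThrough.mpr (hf P S hS))
        (by rw [card_pentadsThrough (hf_ne P), P.2])
    refine ⟨fun P => ⟨f P, hf_ne P⟩, ⟨fun P Q h => Subtype.ext ?_, fun u => ?_⟩, hf⟩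
    · rw [hf_through P, hf_through Q, show f P = f Q from congrArg Subtype.val h]
    · refine ⟨⟨pentadsThrough u, card_pentadsThrough u.2⟩, Subtype.ext ?_⟩
      exact (hf_unique _ u.1 fun S hS => mem_pentadsThrough.mp hS).symm
end

section
/- Every g ∈ Sp(U) maps each pentad onto a pentad, and the resulting group homomorphism from Sp(U) to the group of permutations of the (six-element) set of pentads is bijective, i.e. it is a group isomorphism of Sp(U) with the symmetric group on the six pentads. -/
/-- The symplectic group `Sp(U) = Sp(4,𝔽₂)`: linear automorphisms of `U`
preserving the symplectic form. -/
def Sp : Subgroup (Uspace ≃ₗ[ZMod 2] Uspace) where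
  carrier := {g | ∀ x y : Uspace, symForm (g x) (g y) = symForm x y}
  one_mem' := fun _ _ => rfl
  mul_mem' := by
    intro a b ha hb x y
    exact (ha (b x) (b y)).trans (hb x y)
  inv_mem' := by
    intro a ha x y
    have h := ha (a⁻¹ x) (a⁻¹ y)
    rw [show a (a⁻¹ x) = x from a.apply_symm_apply x,
      show a (a⁻¹ y) = y from a.apply_symm_apply y] at h
    exact h.symm

theorem symForm_add_left (x y z : Uspace) :
    symForm (x + y) z = symForm x z + symForm y z := by
  simp only [symForm, Pi.add_apply]; ring

theorem symForm_self (x : Uspace) : symForm x x = 0 := by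
  have h : symForm x x = 2 * (x 0 * x 2 + x 1 * x 3) := by simp only [symForm]; ring
  rw [h, show (2 : ZMod 2) = 0 from rfl, zero_mul]

/-- Six vectors labelling the pentads: under the identification of nonzero vectors with pairs in
`Fin 6`, `pt i` is the pair `{0, i}`, so that `pt i + pt j` is the pair `{i, j}`. -/
def pt : Fin 6 → Uspace :=
  ![![0, 0, 0, 0], ![1, 0, 0, 0], ![0, 0, 1, 0], ![1, 1, 1, 0], ![1, 0, 1, 1], ![1, 1, 1, 1]]

/-- The `i`-th pentad: the five pairs containing `i`. -/
def pentad (i : Fin 6) : Finset Uspace :=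
  (Finset.univ.erase i).image fun j => pt i + pt j

/-- The only possible pentad containing two given vectors `a`, `b` with `⟨a, b⟩ = 1`. -/
def spanPentad (a b : Uspace) : Finset Uspace :=
  {x | x = a ∨ x = b ∨ (symForm x a = 1 ∧ symForm x b = 1 ∧ x ≠ a + b)}

theorem spanPentad_eq_pentad :
    ∀ a b : Uspace, symForm a b = 1 → ∃ i, spanPentad a b = pentad i := by
  decide +kernel

theorem isPentad_pentad (i : Fin 6) : IsPentad (pentad i) := by
  unfold IsPentad
  revert i
  decide +kernel

theorem eq_spanPentad {S : Finset Uspace} (hS : IsPentad S) {a b : Uspace} (ha : a ∈ S)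
    (hb : b ∈ S) (hab : a ≠ b) : S = spanPentad a b := by
  obtain ⟨i, hi⟩ := spanPentad_eq_pentad a b (hS.2.2 a ha b hb hab)
  refine Finset.eq_of_subset_of_card_le (fun x hx => ?_) ?_
  · simp only [spanPentad, Finset.mem_filter, Finset.mem_univ, true_and]
    by_cases hxa : x = a
    · exact Or.inl hxa
    by_cases hxb : x = b
    · exact Or.inr (Or.inl hxb)
    refine Or.inr (Or.inr ⟨hS.2.2 x hx a ha hxa, hS.2.2 x hx b hb hxb, ?_⟩)
    rintro rfl
    -- A further element `c` of `S` pairs to `1` with `a` and `b`, hence to `0` with `a + b`.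
    obtain ⟨c, hc, hc'⟩ : ∃ c ∈ S, c ∉ ({a, b, a + b} : Finset Uspace) :=
      Finset.exists_mem_notMem_of_card_lt_card
        (lt_of_le_of_lt Finset.card_le_three (by rw [hS.2.1]; norm_num))
    simp only [Finset.mem_insert, Finset.mem_singleton, not_or] at hc'
    have h := hS.2.2 _ hx c hc (Ne.symm hc'.2.2)
    rw [symForm_add_left, hS.2.2 a ha c hc (Ne.symm hc'.1),
      hS.2.2 b hb c hc (Ne.symm hc'.2.1)] at h
    exact absurd h (by decide)
  · rw [hi, (isPentad_pentad i).2.1, hS.2.1]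

theorem exists_eq_pentad {S : Finset Uspace} (hS : IsPentad S) : ∃ i, S = pentad i := by
  obtain ⟨a, ha, b, hb, hab⟩ := Finset.one_lt_card.1 (by rw [hS.2.1]; norm_num : 1 < S.card)
  obtain ⟨i, hi⟩ := spanPentad_eq_pentad a b (hS.2.2 a ha b hb hab)
  exact ⟨i, (eq_spanPentad hS ha hb hab).trans hi⟩

theorem pentad_inter : ∀ i j : Fin 6, i ≠ j →
    ∀ x ∈ pentad i, x ∈ pentad j → x = pt i + pt j := by
  decide +kernel

theorem pt_add_mem_left : ∀ i j : Fin 6, i ≠ j → pt i + pt j ∈ pentad i := by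
  decide +kernel

theorem exists_eq_pt_add : ∀ x : Uspace, ∃ i j, x = pt i + pt j := by
  decide +kernel

/-- The underlying function `x ↦ x + ⟨x, v⟩ v` of the transvection along `v`. -/
def transvectionFun (v x : Uspace) : Uspace := x + symForm x v • v

theorem transvectionFun_involutive (v : Uspace) : Function.Involutive (transvectionFun v) := by
  intro x
  have h : symForm (symForm x v • v) v = 0 := by
    have : symForm (symForm x v • v) v = symForm x v * symForm v v := by
      simp only [symForm, Pi.smul_apply, smul_eq_mul]; ring
    rw [this, symForm_self, mul_zero]
  simp only [transvectionFun, symForm_add_left, h, add_zero, add_assoc, CharTwo.add_self_eq_zero]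

/-- The symplectic transvection along `v`, as an element of `Sp(U)`. -/
def transvection (v : Uspace) : Sp :=
  ⟨LinearEquiv.ofInvolutive
    { toFun := transvectionFun v
      map_add' := fun x y => by
        simp only [transvectionFun, symForm_add_left, add_smul]; abel
      map_smul' := fun c x => by
        have h : symForm (c • x) v = c * symForm x v := by
          simp only [symForm, Pi.smul_apply, smul_eq_mul]; ring
        simp only [transvectionFun, h, smul_add, mul_smul, RingHom.id_apply] }
    (transvectionFun_involutive v), fun x y => by
      change symForm (transvectionFun v x) (transvectionFun v y) = symForm x y
      have h : symForm (transvectionFun v x) (transvectionFun v y) =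
          symForm x y + symForm x v * symForm y v + symForm x v * symForm y v
            + symForm x v * symForm y v * symForm v v := by
        simp only [transvectionFun, symForm, Pi.add_apply, Pi.smul_apply, smul_eq_mul]; ring
      rw [h, symForm_self, mul_zero, add_zero, add_assoc, CharTwo.add_self_eq_zero, add_zero]⟩

theorem image_transvectionFun_pentad : ∀ i j k : Fin 6, i ≠ j →
    (pentad k).image (transvectionFun (pt i + pt j)) = pentad (Equiv.swap i j k) := by
  decide +kernel

theorem image_transvection_pentad {i j : Fin 6} (k : Fin 6) (hij : i ≠ j) :
    (pentad k).image
        (fun x => (transvection (pt i + pt j) : Uspace ≃ₗ[ZMod 2] Uspace) x) =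
      pentad (Equiv.swap i j k) :=
  image_transvectionFun_pentad i j k hij

theorem IsPentad.image {S : Finset Uspace} (hS : IsPentad S) (g : Sp) :
    IsPentad (S.image (fun x => (g : Uspace ≃ₗ[ZMod 2] Uspace) x)) := by
  refine ⟨fun h => ?_, ?_, ?_⟩
  · obtain ⟨x, hx, h0⟩ := Finset.mem_image.1 h
    rw [LinearEquiv.map_eq_zero_iff] at h0
    exact hS.1 (h0 ▸ hx)
  · rw [Finset.card_image_of_injective _ (LinearEquiv.injective _), hS.2.1]
  · intro u hu v hv huv
    obtain ⟨x, hx, rfl⟩ := Finset.mem_image.1 hu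
    obtain ⟨y, hy, rfl⟩ := Finset.mem_image.1 hv
    rw [g.2 x y]
    exact hS.2.2 x hx y hy fun h => huv (by rw [h])

/-- The action of `Sp(U)` on the set of pentads, as a homomorphism to its permutation group. -/
def pentadHom : Sp →* Equiv.Perm {S : Finset Uspace // IsPentad S} :=
  MonoidHom.toHomPerm
    { toFun := fun g S => ⟨S.1.image (fun x => (g : Uspace ≃ₗ[ZMod 2] Uspace) x), S.2.image g⟩
      map_one' := by
        funext S
        exact Subtype.ext Finset.image_id
      map_mul' := fun g h => by
        funext S
        exact Subtype.ext (Finset.image_image (s := S.1)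
          (f := fun x => (h : Uspace ≃ₗ[ZMod 2] Uspace) x)
          (g := fun x => (g : Uspace ≃ₗ[ZMod 2] Uspace) x)).symm }

theorem pentadHom_coe (g : Sp) (S : {S : Finset Uspace // IsPentad S}) :
    ((pentadHom g S : {S : Finset Uspace // IsPentad S}) : Finset Uspace) =
      S.1.image (fun x => (g : Uspace ≃ₗ[ZMod 2] Uspace) x) := rfl

theorem pentadHom_injective : Function.Injective pentadHom := by
  refine (injective_iff_map_eq_one _).2 fun g hg => ?_
  have hmem : ∀ i, ∀ x ∈ pentad i, (g : Uspace ≃ₗ[ZMod 2] Uspace) x ∈ pentad i := by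
    intro i x hx
    have h := pentadHom_coe g ⟨pentad i, isPentad_pentad i⟩
    rw [hg] at h
    change pentad i = _ at h
    rw [h]
    exact Finset.mem_image_of_mem _ hx
  refine Subtype.ext (LinearEquiv.ext fun x => ?_)
  change (g : Uspace ≃ₗ[ZMod 2] Uspace) x = x
  obtain ⟨i, j, rfl⟩ := exists_eq_pt_add x
  by_cases hij : i = j
  · rw [hij, CharTwo.add_self_eq_zero, map_zero]
  · refine pentad_inter i j hij _ (hmem i _ (pt_add_mem_left i j hij)) (hmem j _ ?_)
    rw [add_comm]
    exact pt_add_mem_left j i (Ne.symm hij)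

theorem pentadHom_transvection {i j : Fin 6} (hij : i ≠ j) :
    pentadHom (transvection (pt i + pt j)) =
      Equiv.swap ⟨pentad i, isPentad_pentad i⟩ ⟨pentad j, isPentad_pentad j⟩ := by
  ext1 ⟨S, hS⟩
  obtain ⟨k, rfl⟩ := exists_eq_pentad hS
  refine Subtype.ext ?_
  rw [pentadHom_coe, image_transvection_pentad k hij]
  by_cases hi : k = i
  · subst hi
    rw [Equiv.swap_apply_left, Equiv.swap_apply_left]
  by_cases hj : k = j
  · subst hj
    rw [Equiv.swap_apply_right, Equiv.swap_apply_right]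
  have hinj : ∀ a b : Fin 6, pentad a = pentad b → a = b := by decide +kernel
  rw [Equiv.swap_apply_of_ne_of_ne hi hj, Equiv.swap_apply_of_ne_of_ne]
  · exact fun h => hi (hinj _ _ (congrArg Subtype.val h))
  · exact fun h => hj (hinj _ _ (congrArg Subtype.val h))

theorem pentadHom_surjective : Function.Surjective pentadHom := by
  rw [← MonoidHom.range_eq_top, eq_top_iff, ← Equiv.Perm.closure_isSwap, Subgroup.closure_le]
  rintro σ ⟨⟨S, hS⟩, ⟨T, hT⟩, hne, rfl⟩
  obtain ⟨i, rfl⟩ := exists_eq_pentad hS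
  obtain ⟨j, rfl⟩ := exists_eq_pentad hT
  exact ⟨_, pentadHom_transvection fun h => hne (by subst h; rfl)⟩

/-- Every element of `Sp(U)` maps pentads onto pentads, and the resulting
homomorphism from `Sp(U)` to the permutation group of the set of pentads is a
group isomorphism. -/
theorem sp_iso_perm_pentads :
    (∀ g : Sp, ∀ S : Finset Uspace, IsPentad S →
        IsPentad (S.image (fun x => (g : Uspace ≃ₗ[ZMod 2] Uspace) x))) ∧
    ∃ φ : Sp →* Equiv.Perm {S : Finset Uspace // IsPentad S},
      (∀ (g : Sp) (S : {S : Finset Uspace // IsPentad S}),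
          ((φ g S : {S : Finset Uspace // IsPentad S}) : Finset Uspace) =
            S.1.image (fun x => (g : Uspace ≃ₗ[ZMod 2] Uspace) x)) ∧
      Function.Bijective φ := by
  exact ⟨fun g _ hS => hS.image g, pentadHom, pentadHom_coe,
    pentadHom_injective, pentadHom_surjective⟩
end
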